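/- Every 2-tree G admits a contact representation by touching L-shapes: an assignment of an L-shape to each vertex such that the images of the L-shapes of distinct non-adjacent vertices are disjoint; the images of the L-shapes of two adjacent vertices intersect in exactly one point, which is an endpoint of one of the two arcs and is not an endpoint of the other arc; and no point of ℝ² lies on the images of three distinct L-shapes. -/

import Mathlib

/-- An arc: an injective continuous map from `[0,1]` to `ℝ²`
(formalized as a map `ℝ → ℝ × ℝ` that is continuous and injective on `[0,1]`). -/
structure Arc where
  toFun : ℝ → ℝ × ℝ
  contOn : ContinuousOn toFun (Set.Icc 0 1)
  injOn : Set.InjOn toFun (Set.Icc 0 1)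

/-- The image of an arc. -/
def Arc.img (γ : Arc) : Set (ℝ × ℝ) := γ.toFun '' Set.Icc 0 1

/-- The endpoints of an arc. -/
def Arc.ends (γ : Arc) : Set (ℝ × ℝ) := {γ.toFun 0, γ.toFun 1}

/-- Two arcs cross properly at `q`: `q` is an interior point of both arcs, and there is
an open neighbourhood of `q` mapped homeomorphically onto the open unit disk with `q ↦ 0`,
taking the first arc to the horizontal diameter and the second to the vertical diameter. -/
def CrossesProperlyAt (γ₁ γ₂ : Arc) (q : ℝ × ℝ) : Prop :=
  (∃ s ∈ Set.Ioo (0:ℝ) 1, γ₁.toFun s = q) ∧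
  (∃ t ∈ Set.Ioo (0:ℝ) 1, γ₂.toFun t = q) ∧
  ∃ h : PartialHomeomorph (ℝ × ℝ) (ℝ × ℝ),
    q ∈ h.source ∧ h.target = Metric.ball (0 : ℝ × ℝ) 1 ∧ h q = 0 ∧
    h '' (h.source ∩ γ₁.img) = {z : ℝ × ℝ | z ∈ Metric.ball (0 : ℝ × ℝ) 1 ∧ z.2 = 0} ∧
    h '' (h.source ∩ γ₂.img) = {z : ℝ × ℝ | z ∈ Metric.ball (0 : ℝ × ℝ) 1 ∧ z.1 = 0}

/-- A 1-string representation of a simple graph `G`. -/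
structure OneStringRep {V : Type} (G : SimpleGraph V) where
  γ : V → Arc
  adj_inter : ∀ u v : V, G.Adj u v → ∃ q : ℝ × ℝ, (γ u).img ∩ (γ v).img = {q}
  nonadj_disjoint : ∀ u v : V, u ≠ v → ¬G.Adj u v → (γ u).img ∩ (γ v).img = ∅
  proper : ∀ u v : V, u ≠ v → ∀ q ∈ (γ u).img ∩ (γ v).img, CrossesProperlyAt (γ u) (γ v) q
  no_triple : ∀ u v w : V, u ≠ v → u ≠ w → v ≠ w → (γ u).img ∩ (γ v).img ∩ (γ w).img = ∅

/-- A straight-line plane drawing of a simple graph. -/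
def IsPlaneDrawing {V : Type} (G : SimpleGraph V) (p : V → ℝ × ℝ) : Prop :=
  Function.Injective p ∧
  (∀ u v x y : V, G.Adj u v → G.Adj x y → u ≠ x → u ≠ y → v ≠ x → v ≠ y →
    segment ℝ (p u) (p v) ∩ segment ℝ (p x) (p y) = ∅) ∧
  (∀ u v w : V, G.Adj u v → G.Adj u w → v ≠ w →
    segment ℝ (p u) (p v) ∩ segment ℝ (p u) (p w) = {p u}) ∧
  (∀ u v w : V, G.Adj u v → w ≠ u → w ≠ v → p w ∉ segment ℝ (p u) (p v))

/-- The angle of the vector from `a` to `b`. -/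
noncomputable def angleAt (a b : ℝ × ℝ) : ℝ := Complex.arg ⟨b.1 - a.1, b.2 - a.2⟩

/-- A 1-string representation is order-preserving w.r.t. a straight-line plane drawing `p`:
for each vertex `v`, listing the neighbours `w₁, …, w_k` sorted by the angle of `p wᵢ - p v`,
there are a traversal direction of `γ v` and a cyclic rotation of the list such that the
intersection points of `γ v` with the `γ wᵢ` occur along `γ v`, in that traversal direction,
exactly in the rotated order. -/
def OrderPreserving {V : Type} (G : SimpleGraph V) (p : V → ℝ × ℝ)
    (R : OneStringRep G) : Prop :=
  ∀ v : V, ∃ l : List V,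
    l.Nodup ∧ (∀ w : V, w ∈ l ↔ G.Adj v w) ∧
    l.Pairwise (fun w w' => angleAt (p v) (p w) < angleAt (p v) (p w')) ∧
    ∃ (r : ℕ) (dir : Bool) (t : V → ℝ),
      (∀ w ∈ l, t w ∈ Set.Icc (0:ℝ) 1 ∧ (R.γ v).toFun (t w) ∈ (R.γ w).img) ∧
      (l.rotate r).Pairwise (fun w w' => if dir then t w < t w' else t w' < t w)

/-- The union of the images of a family of arcs. -/
def arcUnion {V : Type} (γ : V → Arc) : Set (ℝ × ℝ) := ⋃ v, (γ v).img

/-- The contour of a family of arcs: the unbounded connected component of the complement of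
the union of the images (formalized as the union of all unbounded connected components). -/
def contour {V : Type} (γ : V → Arc) : Set (ℝ × ℝ) :=
  {x | x ∈ (arcUnion γ)ᶜ ∧ ¬ Bornology.IsBounded (connectedComponentIn (arcUnion γ)ᶜ x)}

/-- A `k`-tree: there is an ordering of the vertices such that the first `k` form a clique and
every later vertex has exactly `k` earlier neighbours, which form a clique. -/
def IsKTree {V : Type} (k : ℕ) (G : SimpleGraph V) : Prop :=
  ∃ (n : ℕ) (e : V ≃ Fin n), k ≤ n ∧
    G.IsClique {v : V | (e v).val < k} ∧
    ∀ i : Fin n, k ≤ i.val →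
      ∃ S : Finset V, S.card = k ∧
        (∀ w : V, w ∈ S ↔ G.Adj (e.symm i) w ∧ (e w).val < i.val) ∧
        G.IsClique ↑S

/-- An L-shape: an arc whose image is the union of a vertical segment from `(x, y+h)` to
`(x, y)` and a horizontal segment from `(x, y)` to `(x+w, y)` with `w, h > 0`. -/
def IsLShape (γ : Arc) : Prop :=
  ∃ x y w h : ℝ, 0 < w ∧ 0 < h ∧
    γ.img = segment ℝ (x, y + h) (x, y) ∪ segment ℝ (x, y) (x + w, y)

/-- A 1-bend orthogonal arc: its image is a single horizontal or vertical segment, or the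
union of a horizontal segment and a vertical segment sharing exactly one endpoint. -/
def IsOneBendOrth (γ : Arc) : Prop :=
  (∃ a b : ℝ × ℝ, a ≠ b ∧ (a.1 = b.1 ∨ a.2 = b.2) ∧ γ.img = segment ℝ a b) ∨
  (∃ a b c : ℝ × ℝ, a ≠ b ∧ b ≠ c ∧
    ((a.1 = b.1 ∧ b.2 = c.2) ∨ (a.2 = b.2 ∧ b.1 = c.1)) ∧
    γ.img = segment ℝ a b ∪ segment ℝ b c ∧ segment ℝ a b ∩ segment ℝ b c = {b})

/-- A graph is 2-connected if it has at least 3 vertices and deleting any single vertex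
leaves a connected graph. -/
def TwoConnected {V : Type} (G : SimpleGraph V) : Prop :=
  3 ≤ Nat.card V ∧ ∀ v : V, ((⊤ : G.Subgraph).deleteVerts {v}).coe.Connected

open Filter Topology Metric

/-!
Vertices are added one at a time in the order of the 2-tree, keeping a contact representation in
which any two touching L-shapes meet away from their corners. A new vertex `v` has exactly two
earlier neighbours, and these touch at a point `q`: the horizontal arm of one runs into `q` from the
left and the vertical arm of the other comes up to `q` from below. No other L-shape contains `q`,
so a small L-shape placed to the lower left of `q`, reaching up to the first arm and right to the
second one, touches exactly these two and does not contain `q`.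
-/

/-- The position and arm lengths of an L-shape: corner `(x, y)`, horizontal arm of length `w` to
the right, vertical arm of length `h` upwards. -/
structure LShape where
  x : ℝ
  y : ℝ
  w : ℝ
  h : ℝ
  w_pos : 0 < w
  h_pos : 0 < h

namespace LShape

variable {L M : LShape}

/-- The point set of an L-shape: its vertical arm together with its horizontal arm. -/
def carrier (L : LShape) : Set (ℝ × ℝ) :=
  {L.x} ×ˢ Set.Icc L.y (L.y + L.h) ∪ Set.Icc L.x (L.x + L.w) ×ˢ {L.y}

lemma mem_carrier {p : ℝ × ℝ} : p ∈ L.carrier ↔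
    (p.1 = L.x ∧ L.y ≤ p.2 ∧ p.2 ≤ L.y + L.h) ∨ ((L.x ≤ p.1 ∧ p.1 ≤ L.x + L.w) ∧ p.2 = L.y) :=
  Iff.rfl

lemma isClosed_carrier (L : LShape) : IsClosed L.carrier :=
  (isClosed_singleton.prod isClosed_Icc).union (isClosed_Icc.prod isClosed_singleton)

/-- The parametrization of an L-shape that runs down the vertical arm for `t ≤ 1 / 2` and along the
horizontal arm for `1 / 2 ≤ t`. -/
noncomputable def toArc (L : LShape) : Arc where
  toFun t := (L.x + L.w * (2 * t - 1)⁺, L.y + L.h * (2 * t - 1)⁻)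
  contOn := by
    have := continuous_posPart (α := ℝ)
    have := continuous_negPart (α := ℝ)
    fun_prop
  injOn s _ t _ hst := by
    simp only [Prod.mk.injEq, add_right_inj, mul_right_inj' L.w_pos.ne',
      mul_right_inj' L.h_pos.ne'] at hst
    have : 2 * s - 1 = 2 * t - 1 := by
      rw [← posPart_sub_negPart (2 * s - 1), hst.1, hst.2, posPart_sub_negPart]
    linarith

lemma toArc_apply_of_le {t : ℝ} (ht : t ≤ 1 / 2) :
    L.toArc.toFun t = (L.x, L.y + L.h - 2 * L.h * t) := by
  have h : 2 * t - 1 ≤ 0 := by linarith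
  simp only [toArc, posPart_eq_zero.2 h, negPart_eq_neg.2 h]
  ext <;> simp only <;> ring

lemma toArc_apply_of_ge {t : ℝ} (ht : 1 / 2 ≤ t) :
    L.toArc.toFun t = (L.x - L.w + 2 * L.w * t, L.y) := by
  have h : 0 ≤ 2 * t - 1 := by linarith
  simp only [toArc, posPart_eq_self.2 h, negPart_eq_zero.2 h]
  ext <;> simp only <;> ring

lemma image_toArc_Icc_zero_half :
    L.toArc.toFun '' Set.Icc 0 (1 / 2) = {L.x} ×ˢ Set.Icc L.y (L.y + L.h) := by
  have hh := L.h_pos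
  calc L.toArc.toFun '' Set.Icc 0 (1 / 2)
      = Prod.mk L.x '' ((L.y + L.h - ·) '' ((2 * L.h * ·) '' Set.Icc 0 (1 / 2))) := by
        rw [Set.image_image, Set.image_image]
        exact Set.image_congr fun t ht ↦ toArc_apply_of_le ht.2
    _ = {L.x} ×ˢ Set.Icc L.y (L.y + L.h) := by
        rw [Set.image_mul_left_Icc (by positivity) (by norm_num), Set.image_const_sub_Icc,
          Set.singleton_prod]
        ring_nf

lemma image_toArc_Icc_half_one :
    L.toArc.toFun '' Set.Icc (1 / 2) 1 = Set.Icc L.x (L.x + L.w) ×ˢ {L.y} := by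
  have hw := L.w_pos
  calc L.toArc.toFun '' Set.Icc (1 / 2) 1
      = (·, L.y) '' ((L.x - L.w + ·) '' ((2 * L.w * ·) '' Set.Icc (1 / 2) 1)) := by
        rw [Set.image_image, Set.image_image]
        exact Set.image_congr fun t ht ↦ toArc_apply_of_ge ht.1
    _ = Set.Icc L.x (L.x + L.w) ×ˢ {L.y} := by
        rw [Set.image_mul_left_Icc (by positivity) (by norm_num), Set.image_const_add_Icc,
          Set.prod_singleton]
        ring_nf

lemma img_toArc (L : LShape) : L.toArc.img = L.carrier := by
  rw [Arc.img, ← Set.Icc_union_Icc_eq_Icc (b := 1 / 2) (by norm_num) (by norm_num),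
    Set.image_union, image_toArc_Icc_zero_half, image_toArc_Icc_half_one, carrier]

lemma ends_toArc (L : LShape) : L.toArc.ends = {(L.x, L.y + L.h), (L.x + L.w, L.y)} := by
  rw [Arc.ends, toArc_apply_of_le (by norm_num), toArc_apply_of_ge (by norm_num)]
  ring_nf

lemma isLShape_toArc (L : LShape) : IsLShape L.toArc := by
  refine ⟨L.x, L.y, L.w, L.h, L.w_pos, L.h_pos, ?_⟩
  have hw := L.w_pos
  have hh := L.h_pos
  rw [img_toArc, carrier, segment_symm ℝ (L.x, L.y + L.h), ← Prod.image_mk_segment_right,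
    ← Prod.image_mk_segment_left, segment_eq_Icc (by linarith), segment_eq_Icc (by linarith),
    Set.singleton_prod, Set.prod_singleton]

/-- The point where the horizontal line through the corner of `L` crosses the vertical line through
the corner of `M`. -/
def contactPoint (L M : LShape) : ℝ × ℝ := (M.x, L.y)

/-- The horizontal arm of `L` touches the vertical arm of `M`: they meet away from both corners, and
the contact point is the free end of exactly one of the two arms. -/
structure HTouches (L M : LShape) : Prop where
  x_lt : L.x < M.x
  x_le : M.x ≤ L.x + L.w
  y_lt : M.y < L.y
  y_le : L.y ≤ M.y + M.h
  xor_end : Xor (M.x = L.x + L.w) (L.y = M.y + M.h)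

/-- The horizontal arm of one of the two L-shapes touches the vertical arm of the other. -/
def Touches (L M : LShape) : Prop := L.HTouches M ∨ M.HTouches L

lemma Touches.symm (h : L.Touches M) : M.Touches L := Or.symm h

lemma HTouches.carrier_inter (h : L.HTouches M) : L.carrier ∩ M.carrier = {L.contactPoint M} := by
  obtain ⟨hx, hx', hy, hy', -⟩ := h
  ext p
  simp only [Set.mem_inter_iff, mem_carrier, Set.mem_singleton_iff, contactPoint, Prod.ext_iff]
  grind

lemma HTouches.contactPoint_mem_ends_left (h : L.HTouches M) :
    L.contactPoint M ∈ L.toArc.ends ↔ M.x = L.x + L.w := by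
  simp [ends_toArc, contactPoint, h.x_lt.ne']

lemma HTouches.contactPoint_mem_ends_right (h : L.HTouches M) :
    L.contactPoint M ∈ M.toArc.ends ↔ L.y = M.y + M.h := by
  simp [ends_toArc, contactPoint, h.y_lt.ne']

lemma Touches.exists_img_inter_eq_singleton (h : L.Touches M) :
    ∃ q, L.toArc.img ∩ M.toArc.img = {q} ∧ Xor (q ∈ L.toArc.ends) (q ∈ M.toArc.ends) := by
  simp only [img_toArc]
  rcases h with h | h
  · refine ⟨L.contactPoint M, h.carrier_inter, ?_⟩
    rw [h.contactPoint_mem_ends_left, h.contactPoint_mem_ends_right]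
    exact h.xor_end
  · refine ⟨M.contactPoint L, by rw [Set.inter_comm, h.carrier_inter], ?_⟩
    rw [xor_comm, h.contactPoint_mem_ends_left, h.contactPoint_mem_ends_right]
    exact h.xor_end

/-- The L-shape whose ends are the top left and bottom right corners of the square of side `d` with
top right corner `q`. Near a contact point `q` it touches both L-shapes that meet in `q`. -/
noncomputable def inscribed (q : ℝ × ℝ) (d : ℝ) (hd : 0 < d) : LShape :=
  ⟨q.1 - d, q.2 - d, d, d, hd, hd⟩

section Inscribed

variable {q : ℝ × ℝ} {d : ℝ} (hd : 0 < d)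

lemma carrier_inscribed_subset_closedBall : (inscribed q d hd).carrier ⊆ closedBall q d := by
  intro p hp
  rw [mem_carrier] at hp
  rw [← Prod.mk.eta (p := q), ← closedBall_prod_same, Set.mem_prod, Real.closedBall_eq_Icc,
    Real.closedBall_eq_Icc, Set.mem_Icc, Set.mem_Icc]
  grind [inscribed]

lemma notMem_carrier_inscribed : q ∉ (inscribed q d hd).carrier := by
  rw [mem_carrier]
  grind [inscribed]

lemma HTouches.inscribed_right (h : L.HTouches M) (hdx : d < M.x - L.x) :
    L.HTouches (inscribed (L.contactPoint M) d hd) := by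
  obtain ⟨-, hx', -, -, -⟩ := h
  constructor <;> simp only [inscribed, contactPoint] <;> grind

lemma HTouches.inscribed_left (h : L.HTouches M) (hdy : d < L.y - M.y) :
    (inscribed (L.contactPoint M) d hd).HTouches M := by
  obtain ⟨-, -, -, hy', -⟩ := h
  constructor <;> simp only [inscribed, contactPoint] <;> grind

end Inscribed

end LShape

lemma eventually_disjoint_closedBall {X : Type*} [PseudoMetricSpace X] {s : Set X}
    (hs : IsClosed s) {x : X} (hx : x ∉ s) : ∀ᶠ r in 𝓝 0, Disjoint (closedBall x r) s := by
  filter_upwards [eventually_closedBall_subset (hs.compl_mem_nhds hx)] with r hr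
  exact Set.subset_compl_iff_disjoint_right.1 hr

lemma isNClique_two_iff {V : Type*} [DecidableEq V] {G : SimpleGraph V} {s : Finset V} :
    G.IsNClique 2 s ↔ ∃ a b, G.Adj a b ∧ s = {a, b} := by
  rw [SimpleGraph.isNClique_iff, Finset.card_eq_two]
  constructor
  · rintro ⟨hs, a, b, hab, rfl⟩
    exact ⟨a, b, hs (by simp) (by simp) hab, rfl⟩
  · rintro ⟨a, b, hab, rfl⟩
    exact ⟨by simpa [SimpleGraph.isClique_pair] using fun _ ↦ hab, a, b, hab.ne, rfl⟩

lemma IsKTree.induction {V : Type} [Fintype V] [DecidableEq V] {k : ℕ} {G : SimpleGraph V}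
    (hG : IsKTree k G) {motive : Finset V → Prop}
    (clique : ∀ A : Finset V, G.IsNClique k A → motive A)
    (extend : ∀ (A : Finset V) (v : V), ∀ S ⊆ A, v ∉ A → G.IsNClique k S →
      (∀ u ∈ A, G.Adj v u ↔ u ∈ S) → motive A → motive (insert v A)) :
    motive Finset.univ := by
  obtain ⟨n, e, hkn, hclique, hstep⟩ := hG
  let A (m : ℕ) : Finset V := {v | (e v).val < m}
  have mem_A (m : ℕ) (v : V) : v ∈ A m ↔ (e v).val < m := by simp [A]
  have hA (m : ℕ) (hkm : k ≤ m) : m ≤ n → motive (A m) := by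
    induction m, hkm using Nat.le_induction with
    | base =>
      refine fun _ ↦ clique _ ⟨by simpa [A] using hclique, ?_⟩
      have hmap : (A k).map e.toEmbedding = ({i | i.val < k} : Finset (Fin n)) := by
        ext i
        simp [A]
      rw [← Finset.card_map e.toEmbedding, hmap, Fin.card_filter_val_lt, min_eq_right hkn]
    | succ m hkm ih =>
      intro hmn
      obtain ⟨S, hcard, hS, hSclique⟩ := hstep ⟨m, hmn⟩ hkm
      set v := e.symm ⟨m, hmn⟩
      have hv : (e v).val = m := by simp [v]
      have hA_succ : A (m + 1) = insert v (A m) := by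
        ext u
        rw [Finset.mem_insert, mem_A, mem_A, ← e.injective.eq_iff, Fin.ext_iff]
        omega
      rw [hA_succ]
      refine extend (A m) v S (fun u hu ↦ (mem_A m u).2 ((hS u).1 hu).2) (by simp [mem_A, hv])
        ⟨hSclique, hcard⟩ (fun u hu ↦ ?_) (ih (by omega))
      rw [hS, and_iff_left ((mem_A m u).1 hu)]
  convert hA n hkn le_rfl
  ext v
  simp [mem_A]

/-- The L-shapes `L v` for `v ∈ A` form a contact representation of the subgraph of `G` induced
on `A`. -/
structure IsContactRep {V : Type*} (G : SimpleGraph V) (L : V → LShape) (A : Finset V) :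
    Prop where
  touches : ∀ u ∈ A, ∀ v ∈ A, G.Adj u v → (L u).Touches (L v)
  disjoint : ∀ u ∈ A, ∀ v ∈ A, u ≠ v → ¬G.Adj u v → Disjoint (L u).carrier (L v).carrier
  no_triple : ∀ u ∈ A, ∀ v ∈ A, ∀ w ∈ A, u ≠ v → u ≠ w → v ≠ w →
    Disjoint ((L u).carrier ∩ (L v).carrier) (L w).carrier

namespace IsContactRep

open LShape

variable {V : Type*} {G : SimpleGraph V} {L L' : V → LShape} {A : Finset V} {a b v : V}

lemma congr (hL : IsContactRep G L A) (h : ∀ u ∈ A, L' u = L u) : IsContactRep G L' A where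
  touches u hu v hv := by
    rw [h u hu, h v hv]
    exact hL.touches u hu v hv
  disjoint u hu v hv := by
    rw [h u hu, h v hv]
    exact hL.disjoint u hu v hv
  no_triple u hu v hv w hw := by
    rw [h u hu, h v hv, h w hw]
    exact hL.no_triple u hu v hv w hw

lemma pair [DecidableEq V] (hadj : G.Adj a b) (h : (L a).Touches (L b)) :
    IsContactRep G L {a, b} where
  touches u hu v hv huv := by
    have := h.symm
    have := huv.ne
    grind
  disjoint u hu v hv huv hnadj := by
    have := hadj.symm
    grind
  no_triple u hu v hv w hw huv huw hvw := by grind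

protected lemma insert [DecidableEq V] (hL : IsContactRep G L A)
    (touches : ∀ u ∈ A, G.Adj v u → (L v).Touches (L u))
    (disjoint : ∀ u ∈ A, ¬G.Adj v u → Disjoint (L v).carrier (L u).carrier)
    (no_triple : ∀ u ∈ A, ∀ w ∈ A, u ≠ w →
      Disjoint ((L u).carrier ∩ (L w).carrier) (L v).carrier) :
    IsContactRep G L (insert v A) where
  touches := by
    simp only [Finset.forall_mem_insert, SimpleGraph.irrefl, false_imp_iff, true_and]
    exact ⟨touches, fun u hu ↦ ⟨fun h ↦ (touches u hu h.symm).symm, hL.touches u hu⟩⟩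
  disjoint := by
    simp only [Finset.forall_mem_insert, ne_eq, not_true, false_imp_iff, true_and]
    exact ⟨fun u hu _ ↦ disjoint u hu, fun u hu ↦
      ⟨fun _ h ↦ (disjoint u hu fun h' ↦ h h'.symm).symm, hL.disjoint u hu⟩⟩
  no_triple := by
    have := hL.no_triple
    simp only [Set.disjoint_left, Set.mem_inter_iff] at this no_triple ⊢
    grind

/-- Only the L-shapes of `a` and `b` pass through their contact point and the others are closed, so
a small enough square at this point meets none of the others. -/
lemma exists_touches_both (hL : IsContactRep G L A) (ha : a ∈ A) (hb : b ∈ A)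
    (hab : (L a).Touches (L b)) :
    ∃ N : LShape, N.Touches (L a) ∧ N.Touches (L b) ∧
      Disjoint ((L a).carrier ∩ (L b).carrier) N.carrier ∧
      ∀ c ∈ A, c ≠ a → c ≠ b → Disjoint N.carrier (L c).carrier := by
  wlog h : (L a).HTouches (L b) generalizing a b
  · obtain ⟨N, hNb, hNa, hN, hdisj⟩ := this hb ha hab.symm (hab.resolve_left h)
    exact ⟨N, hNa, hNb, by rwa [Set.inter_comm], fun c hc hca hcb ↦ hdisj c hc hcb hca⟩
  have hne : a ≠ b := fun hab ↦ (hab ▸ h.x_lt).ne rfl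
  set q := (L a).contactPoint (L b)
  have hq : ∀ c ∈ A, c ≠ a → c ≠ b → q ∉ (L c).carrier := fun c hc hca hcb ↦
    Set.disjoint_left.1 (hL.no_triple a ha b hb c hc hne hca.symm hcb.symm)
      (h.carrier_inter ▸ Set.mem_singleton q)
  have hfree : ∀ᶠ d in 𝓝[>] (0 : ℝ), ∀ c ∈ A, c ≠ a → c ≠ b →
      Disjoint (closedBall q d) (L c).carrier := by
    refine ((Finset.eventually_all A).2 fun c hc ↦ ?_).filter_mono nhdsWithin_le_nhds
    simp only [eventually_imp_distrib_left]
    exact fun hca hcb ↦ eventually_disjoint_closedBall (L c).isClosed_carrier (hq c hc hca hcb)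
  have hx : ∀ᶠ d in 𝓝[>] 0, d ∈ Set.Ioo 0 ((L b).x - (L a).x) :=
    Ioo_mem_nhdsGT (sub_pos.2 h.x_lt)
  have hy : ∀ᶠ d in 𝓝[>] 0, d ∈ Set.Ioo 0 ((L a).y - (L b).y) :=
    Ioo_mem_nhdsGT (sub_pos.2 h.y_lt)
  obtain ⟨d, hdisj, ⟨hd, hdx⟩, -, hdy⟩ := (hfree.and (hx.and hy)).exists
  refine ⟨inscribed q d hd, .inr (h.inscribed_right hd hdx), .inl (h.inscribed_left hd hdy), ?_,
    fun c hc hca hcb ↦ ?_⟩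
  · rw [h.carrier_inter, Set.disjoint_singleton_left]
    exact notMem_carrier_inscribed hd
  · exact (hdisj c hc hca hcb).mono_left (carrier_inscribed_subset_closedBall hd)

lemma exists_insert [DecidableEq V] (hL : IsContactRep G L A) (ha : a ∈ A) (hb : b ∈ A)
    (hv : v ∉ A) (hab : G.Adj a b) (hadj : ∀ u ∈ A, G.Adj v u ↔ u = a ∨ u = b) :
    ∃ L' : V → LShape, IsContactRep G L' (insert v A) := by
  obtain ⟨N, hNa, hNb, hN, hdisj⟩ :=
    hL.exists_touches_both ha hb (hL.touches a ha b hb hab)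
  let L' := Function.update L v N
  have hL'v : L' v = N := Function.update_self ..
  have hL' : ∀ u ∈ A, L' u = L u := fun u hu ↦
    Function.update_of_ne (ne_of_mem_of_not_mem hu hv) ..
  refine ⟨L', (hL.congr hL').insert (fun u hu huv ↦ ?_) (fun u hu huv ↦ ?_)
    (fun u hu w hw huw ↦ ?_)⟩
  · rw [hL'v, hL' u hu]
    obtain rfl | rfl := (hadj u hu).1 huv
    exacts [hNa, hNb]
  · rw [hL'v, hL' u hu]
    rw [hadj u hu, not_or] at huv
    exact hdisj u hu huv.1 huv.2
  · rw [hL'v, hL' u hu, hL' w hw]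
    by_cases hu' : u = a ∨ u = b
    · by_cases hw' : w = a ∨ w = b
      · obtain ⟨rfl, rfl⟩ | ⟨rfl, rfl⟩ : u = a ∧ w = b ∨ u = b ∧ w = a := by grind
        exacts [hN, by rwa [Set.inter_comm]]
      · rw [not_or] at hw'
        exact (hdisj w hw hw'.1 hw'.2).symm.mono_left Set.inter_subset_right
    · rw [not_or] at hu'
      exact (hdisj u hu hu'.1 hu'.2).symm.mono_left Set.inter_subset_left

end IsContactRep

lemma IsKTree.exists_isContactRep {V : Type} [Fintype V] {G : SimpleGraph V} (hG : IsKTree 2 G) :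
    ∃ L : V → LShape, IsContactRep G L Finset.univ := by
  classical
  refine hG.induction (motive := fun A ↦ ∃ L : V → LShape, IsContactRep G L A) (fun A hA ↦ ?_)
    fun A v S hSA hv hS hadj ⟨L, hL⟩ ↦ ?_
  · obtain ⟨a, b, hab, rfl⟩ := isNClique_two_iff.1 hA
    let H : LShape := ⟨0, 0, 1, 1, one_pos, one_pos⟩
    let M : LShape := ⟨1, -1, 1, 2, one_pos, two_pos⟩
    have hHM : H.HTouches M := by constructor <;> norm_num [H, M]
    refine ⟨fun v ↦ if v = a then H else M, .pair hab (.inl ?_)⟩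
    rwa [if_pos rfl, if_neg hab.ne']
  · obtain ⟨a, b, hab, rfl⟩ := isNClique_two_iff.1 hS
    simp only [Finset.mem_insert, Finset.mem_singleton] at hadj
    exact hL.exists_insert (hSA (by simp)) (hSA (by simp)) hv hab hadj

/-- Every 2-tree has a contact representation by touching L-shapes: non-adjacent vertices get
disjoint L-shapes; adjacent vertices get L-shapes meeting in exactly one point, which is an
endpoint of exactly one of the two arcs; and no point lies on three of the L-shapes. -/
theorem stmt_5 {V : Type} [Fintype V] (G : SimpleGraph V) (h : IsKTree 2 G) :
    ∃ L : V → Arc,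
      (∀ v : V, IsLShape (L v)) ∧
      (∀ u v : V, u ≠ v → ¬G.Adj u v → (L u).img ∩ (L v).img = ∅) ∧
      (∀ u v : V, G.Adj u v → ∃ q : ℝ × ℝ, (L u).img ∩ (L v).img = {q} ∧
        ((q ∈ (L u).ends ∧ q ∉ (L v).ends) ∨ (q ∈ (L v).ends ∧ q ∉ (L u).ends))) ∧
      (∀ u v w : V, u ≠ v → u ≠ w → v ≠ w →
        (L u).img ∩ (L v).img ∩ (L w).img = ∅) := by
  obtain ⟨L, hL⟩ := h.exists_isContactRep
  have hdisj (u v : V) (huv : u ≠ v) (hnadj : ¬G.Adj u v) :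
      (L u).toArc.img ∩ (L v).toArc.img = ∅ := by
    simp only [LShape.img_toArc]
    exact (hL.disjoint u (Finset.mem_univ u) v (Finset.mem_univ v) huv hnadj).inter_eq
  refine ⟨fun v ↦ (L v).toArc, fun v ↦ (L v).isLShape_toArc, hdisj, fun u v huv ↦ ?_,
    fun u v w huv huw hvw ↦ ?_⟩
  · exact (hL.touches u (Finset.mem_univ u) v (Finset.mem_univ v) huv).exists_img_inter_eq_singleton
  · simp only [LShape.img_toArc]
    exact (hL.no_triple u (Finset.mem_univ u) v (Finset.mem_univ v) w (Finset.mem_univ w)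
      huv huw hvw).inter_eq
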